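/- Let (R, m) be a Noetherian local ring, S := R[X_1,…,X_n] a graded polynomial ring over R with deg X_i > 0 for all i (and R in degree 0), and M a finitely generated graded S-module. Then for every q ≥ 1, Supp_S( Tor_q^R(M, R/m) ) ⊆ Supp_S( Tor_1^R(M, R/m) ). -/

import Mathlib

noncomputable section TorCore

variable (R : Type) [CommRing R] (S : Type) [CommRing S] [Algebra R S]
variable (M : Type) [AddCommGroup M] [Module R M] [Module S M] [IsScalarTower R S M]
variable (F : ℕ → Type) [∀ q, AddCommGroup (F q)] [∀ q, Module R (F q)]
variable (dF : ∀ q : ℕ, F (q + 1) →ₗ[R] F q)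

/-- The differential `M ⊗ F_{q+1} → M ⊗ F_q` of the complex `M ⊗_R F_•`, as a map of
`S`-modules (through the `S`-module structure of `M`). -/
def torD (q : ℕ) : TensorProduct R M (F (q + 1)) →ₗ[S] TensorProduct R M (F q) :=
  TensorProduct.AlgebraTensorModule.map (LinearMap.id : M →ₗ[S] M) (dF q)

/-- The outgoing differential `M ⊗ F_q → M ⊗ F_{q-1}` (the zero map for `q = 0`). -/
def torDout : (q : ℕ) → (TensorProduct R M (F q) →ₗ[S] TensorProduct R M (F (q - 1)))
  | 0 => 0
  | (q + 1) => torD R S M F dF q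

/-- `Tor_q^R(M, N)` computed from a given free resolution `F_• → N` of `N`, as an
`S`-module: the homology `ker(M ⊗ F_q → M ⊗ F_{q-1}) / im(M ⊗ F_{q+1} → M ⊗ F_q)`. -/
def torMod (q : ℕ) : Type :=
  ↥(LinearMap.ker (torDout R S M F dF q)) ⧸
    (Submodule.comap (LinearMap.ker (torDout R S M F dF q)).subtype
      (LinearMap.range (torD R S M F dF q)))

instance (q : ℕ) : AddCommGroup (torMod R S M F dF q) := by unfold torMod; infer_instance
instance (q : ℕ) : Module S (torMod R S M F dF q) := by unfold torMod; infer_instance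

end TorCore

/-!
Let `P` be a prime of `S` in the support of `Tor_q`, `q ≥ 1`. Multiplication by `r ∈ 𝔪` is
null-homotopic on `F_•`, so `𝔪` kills `Tor_q` and `𝔪S ⊆ P`. If `P` were not in the support of
`Tor₁`, then `Tor₁^R(M_P, R/𝔪) = 0`; since `M_P` is finite over the Noetherian local ring `S_P` and
`𝔪S_P` lies in its maximal ideal, the local criterion of flatness makes `M_P` flat over `R`, so that
all higher `Tor_q^R(M_P, R/𝔪) = Tor_q^R(M, R/𝔪)_P` vanish.
-/

open TensorProduct

section TorOneVanishes

universe u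

variable (R : Type u) [CommRing R] (N : Type*) [AddCommGroup N] [Module R N]

/-- The vanishing of `Tor₁^R(N, L)`, expressed without choosing a resolution: `N ⊗ A → N ⊗ B` is
injective for each short exact sequence `0 → A → B → L → 0`. The modules `A` and `B` range over
the universe of `R`, which contains a presentation of each finite `L`. -/
def TorOneVanishes (L : Type*) [AddCommGroup L] [Module R L] : Prop :=
  ∀ ⦃A B : Type u⦄ [AddCommGroup A] [Module R A] [AddCommGroup B] [Module R B]
    (i : A →ₗ[R] B) (ρ : B →ₗ[R] L), Function.Injective i → Function.Exact i ρ →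
    Function.Surjective ρ → Function.Injective (i.lTensor N)

variable {R N}

theorem lTensor_injective_of_pushout {K G A B : Type*} [AddCommGroup K] [Module R K]
    [AddCommGroup G] [Module R G] [AddCommGroup A] [Module R A] [AddCommGroup B] [Module R B]
    {p : K →ₗ[R] A} {j : K →ₗ[R] G} {i : A →ₗ[R] B} {φ : G →ₗ[R] B}
    (hex : Function.Exact (p.prod j) (i.coprod φ)) (hsurj : Function.Surjective (i.coprod φ))
    (hj : Function.Injective (j.lTensor N)) : Function.Injective (i.lTensor N) := by
  rw [injective_iff_map_eq_zero]
  intro x hx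
  obtain ⟨κ, hκ⟩ := (lTensor_exact N hex hsurj ((LinearMap.inl R A G).lTensor N x)).1 (by
    rw [← LinearMap.lTensor_comp_apply, LinearMap.coprod_inl, hx])
  have hκj : j.lTensor N κ = 0 := by
    simpa [← LinearMap.lTensor_comp_apply, LinearMap.snd_comp_inl] using
      congrArg ((LinearMap.snd R A G).lTensor N) hκ
  have hκp : p.lTensor N κ = x := by
    simpa [← LinearMap.lTensor_comp_apply, LinearMap.fst_comp_inl] using
      congrArg ((LinearMap.fst R A G).lTensor N) hκ
  rw [← hκp, (injective_iff_map_eq_zero _).1 hj κ hκj, map_zero]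

theorem torOneVanishes_of_projective {K G L : Type*} [AddCommGroup K] [Module R K]
    [AddCommGroup G] [Module R G] [Module.Projective R G] [AddCommGroup L] [Module R L]
    {j : K →ₗ[R] G} {π : G →ₗ[R] L} (hjπ : Function.Exact j π) (hπ : Function.Surjective π)
    (hj : Function.Injective (j.lTensor N)) : TorOneVanishes R N L := by
  intro A B _ _ _ _ i ρ hi hiρ hρ
  obtain ⟨φ, hφ⟩ := Module.projective_lifting_property ρ π hρ
  have hρφ (g : G) : ρ (φ g) = π g := LinearMap.congr_fun hφ g
  have hφj (k : K) : φ (j k) ∈ LinearMap.range i :=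
    (hiρ _).1 (by rw [hρφ, hjπ.apply_apply_eq_zero])
  let p : K →ₗ[R] A := (φ ∘ₗ j).codRestrictOfInjective i hi hφj
  have hip (k : K) : i (p k) = φ (j k) := LinearMap.codRestrictOfInjective_comp_apply ..
  refine lTensor_injective_of_pushout (p := p) (φ := -φ) ?_ ?_ hj
  · rintro ⟨a, g⟩
    simp only [LinearMap.coprod_apply, LinearMap.neg_apply, ← sub_eq_add_neg, sub_eq_zero,
      Set.mem_range, LinearMap.prod_apply, Function.prod_apply, Prod.mk.injEq]
    constructor
    · intro hag
      obtain ⟨k, rfl⟩ := (hjπ g).1 (by rw [← hρφ, ← hag, hiρ.apply_apply_eq_zero])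
      exact ⟨k, hi ((hip k).trans hag.symm), rfl⟩
    · rintro ⟨k, rfl, rfl⟩
      exact hip k
  · intro b
    obtain ⟨g, hg⟩ := hπ (-ρ b)
    obtain ⟨a, ha⟩ := (hiρ (b + φ g)).1 (by rw [map_add, hρφ, hg, add_neg_cancel])
    exact ⟨(a, g), by simp [ha]⟩

theorem torOneVanishes_of_exact_lTensor {X Y Z L : Type*} [AddCommGroup X] [Module R X]
    [AddCommGroup Y] [Module R Y] [AddCommGroup Z] [Module R Z] [Module.Projective R Z]
    [AddCommGroup L] [Module R L] {f : X →ₗ[R] Y} {g : Y →ₗ[R] Z} {ε : Z →ₗ[R] L}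
    (hgf : g ∘ₗ f = 0) (hgε : Function.Exact g ε) (hε : Function.Surjective ε)
    (hN : Function.Exact (f.lTensor N) (g.lTensor N)) : TorOneVanishes R N L := by
  refine torOneVanishes_of_projective (j := (LinearMap.range g).subtype)
    (fun z ↦ by simpa using hgε z) hε ?_
  rw [injective_iff_map_eq_zero]
  intro x hx
  obtain ⟨y, rfl⟩ := LinearMap.lTensor_surjective N g.surjective_rangeRestrict x
  obtain ⟨w, rfl⟩ := (hN y).1 (by rwa [← LinearMap.lTensor_comp_apply] at hx)
  have hgf' : g.rangeRestrict ∘ₗ f = 0 := by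
    ext w
    exact LinearMap.congr_fun hgf w
  rw [← LinearMap.lTensor_comp_apply, hgf', LinearMap.lTensor_zero, LinearMap.zero_apply]

theorem torOneVanishes_of_subsingleton (L : Type*) [AddCommGroup L] [Module R L]
    [Subsingleton L] : TorOneVanishes R N L := by
  intro A B _ _ _ _ i ρ hi hiρ _
  have hi' : Function.Surjective i := fun b ↦ (hiρ b).1 (Subsingleton.elim _ _)
  exact ((LinearEquiv.ofBijective i ⟨hi, hi'⟩).lTensor N).injective

theorem TorOneVanishes.of_exact {L₁ L₂ L₃ : Type*} [AddCommGroup L₁] [Module R L₁]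
    [AddCommGroup L₂] [Module R L₂] [AddCommGroup L₃] [Module R L₃] {f : L₁ →ₗ[R] L₂}
    {g : L₂ →ₗ[R] L₃} (hf : Function.Injective f) (hfg : Function.Exact f g)
    (hg : Function.Surjective g) (h₁ : TorOneVanishes R N L₁) (h₃ : TorOneVanishes R N L₃) :
    TorOneVanishes R N L₂ := by
  intro A B _ _ _ _ i ρ hi hiρ hρ
  -- Factor `A → B` through the preimage `B'` of `L₁`: the quotients `B'/A` and `B/B'` are `L₁`
  -- and `L₃`.
  let B' := LinearMap.ker (g ∘ₗ ρ)
  let i' : A →ₗ[R] B' := i.codRestrict B' fun a ↦ by simp [B', hiρ.apply_apply_eq_zero]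
  let ρ' : B' →ₗ[R] L₁ :=
    (ρ ∘ₗ B'.subtype).codRestrictOfInjective f hf fun b ↦ (hfg _).1 b.2
  have hfρ' (b : B') : f (ρ' b) = ρ b := LinearMap.codRestrictOfInjective_comp_apply ..
  have hi' : Function.Injective i' := fun a b hab ↦ hi (congrArg Subtype.val hab)
  have hi'ρ' : Function.Exact i' ρ' := by
    intro b
    rw [← map_eq_zero_iff f hf, hfρ', hiρ b]
    simp [i', Subtype.ext_iff]
  have hρ' : Function.Surjective ρ' := by
    intro l
    obtain ⟨b, hb⟩ := hρ (f l)
    have hbB' : b ∈ B' := by simp [B', hb, hfg.apply_apply_eq_zero]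
    exact ⟨⟨b, hbB'⟩, hf ((hfρ' _).trans hb)⟩
  have inj_B' : Function.Injective (B'.subtype.lTensor N) :=
    h₃ B'.subtype (g ∘ₗ ρ) B'.subtype_injective (LinearMap.exact_subtype_ker_map _) (hg.comp hρ)
  have factor : i = B'.subtype ∘ₗ i' := rfl
  rw [factor, LinearMap.lTensor_comp]
  exact inj_B'.comp (h₁ i' ρ' hi' hi'ρ' hρ')

theorem TorOneVanishes.of_linearEquiv {L L' : Type*} [AddCommGroup L] [Module R L]
    [AddCommGroup L'] [Module R L'] (e : L ≃ₗ[R] L') (h : TorOneVanishes R N L) :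
    TorOneVanishes R N L' := fun _ _ _ _ _ _ i ρ hi hiρ hρ ↦
  h i (e.symm.toLinearMap ∘ₗ ρ) hi (fun b ↦ by simpa using hiρ b) (e.symm.surjective.comp hρ)

theorem TorOneVanishes.ker_lTensor_le {A B : Type u} [AddCommGroup A] [Module R A]
    [AddCommGroup B] [Module R B] {f : A →ₗ[R] B}
    (h : TorOneVanishes R N (B ⧸ LinearMap.range f)) :
    LinearMap.ker (f.lTensor N) ≤ LinearMap.range ((LinearMap.ker f).subtype.lTensor N) := by
  intro x hx
  have range_inj : Function.Injective ((LinearMap.range f).subtype.lTensor N) :=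
    h _ _ (Submodule.subtype_injective _) (LinearMap.exact_subtype_mkQ _)
      (Submodule.mkQ_surjective _)
  have ker_exact : Function.Exact (LinearMap.ker f).subtype f.rangeRestrict := fun a ↦ by
    simp [Subtype.ext_iff]
  refine (lTensor_exact N ker_exact f.surjective_rangeRestrict x).1
    ((injective_iff_map_eq_zero _).1 range_inj _ ?_)
  rwa [← LinearMap.lTensor_comp_apply]

theorem TorOneVanishes.of_pow_le_annihilator [IsNoetherianRing R] {m : Ideal R} [m.IsMaximal]
    (h : TorOneVanishes R N (R ⧸ m)) (n : ℕ) (L : Type*) [AddCommGroup L] [Module R L]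
    [Module.Finite R L] (hL : m ^ n ≤ Module.annihilator R L) : TorOneVanishes R N L := by
  induction ‹Module.Finite R L› using
    IsNoetherianRing.induction_on_isQuotientEquivQuotientPrime R with
  | subsingleton L => exact torOneVanishes_of_subsingleton L
  | quotient L p e =>
    have hmp : m ≤ p.asIdeal :=
      p.2.le_of_pow_le (by rwa [e.annihilator_eq, Ideal.annihilator_quotient] at hL)
    obtain rfl := Ideal.IsMaximal.eq_of_le ‹_› p.2.ne_top hmp
    exact h.of_linearEquiv e.symm
  | exact L₁ L₂ L₃ f g hf hg hfg ih₁ ih₃ =>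
    exact .of_exact hf hfg hg (ih₁ (hL.trans (f.annihilator_le_of_injective hf)))
      (ih₃ (hL.trans (g.annihilator_le_of_surjective hg)))

theorem range_lTensor_subtype_le_smul_top {A : Type*} [AddCommGroup A] [Module R A]
    {I : Ideal R} {K : Submodule R A} (hK : K ≤ I • ⊤) :
    LinearMap.range (K.subtype.lTensor N) ≤ I • ⊤ := by
  rintro _ ⟨x, rfl⟩
  induction x with
  | zero => simp
  | add x y hx hy => simpa using add_mem hx hy
  | tmul y a =>
    have map_le : (I • ⊤ : Submodule R A).map (TensorProduct.mk R N A y) ≤ I • ⊤ := by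
      rw [Submodule.map_smul'']
      exact Submodule.smul_mono le_rfl le_top
    exact map_le ⟨a, hK a.2, rfl⟩

theorem TorOneVanishes.flat_of_isHausdorff [IsNoetherianRing R] {m : Ideal R}
    [m.IsMaximal] (hN : ∀ I : Ideal R, IsHausdorff m (N ⊗[R] I))
    (h : TorOneVanishes R N (R ⧸ m)) : Module.Flat R N := by
  rw [Module.Flat.iff_lTensor_injective']
  intro I
  rw [injective_iff_map_eq_zero]
  intro x hx
  rw [← Submodule.mem_bot R, ← (hN I).iInf_pow_smul, Submodule.mem_iInf]
  intro n
  obtain ⟨k, artin_rees⟩ := m.exists_pow_inf_eq_pow_smul (M := R) I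
  -- A power of `m` kills the cokernel of `f : I → R ⧸ Q`, so `x` comes from `N ⊗ (I ⊓ Q)`, and
  -- `I ⊓ Q ≤ m ^ n • I` by Artin–Rees.
  let Q := m ^ (n + k)
  let f : I →ₗ[R] R ⧸ Q := Q.mkQ ∘ₗ I.subtype
  have ker_f_le : LinearMap.ker f ≤ m ^ n • ⊤ := by
    rw [← Submodule.map_le_map_iff_of_injective I.subtype_injective, Submodule.map_smul'',
      Submodule.map_top, Submodule.range_subtype, LinearMap.ker_comp, Submodule.ker_mkQ,
      Submodule.map_comap_subtype]
    calc I ⊓ Q = m ^ (n + k) • ⊤ ⊓ I := by rw [inf_comm, smul_eq_mul, Ideal.mul_top]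
      _ = m ^ n • (m ^ k • ⊤ ⊓ I) := by rw [artin_rees _ (Nat.le_add_left k n), Nat.add_sub_cancel]
      _ ≤ m ^ n • I := Submodule.smul_mono le_rfl inf_le_right
  have tor_coker_f : TorOneVanishes R N ((R ⧸ Q) ⧸ LinearMap.range f) := by
    refine h.of_pow_le_annihilator (n + k) _ ?_
    calc m ^ (n + k) = Module.annihilator R (R ⧸ Q) := Ideal.annihilator_quotient.symm
      _ ≤ _ := LinearMap.annihilator_le_of_surjective _ (Submodule.mkQ_surjective _)
  refine range_lTensor_subtype_le_smul_top ker_f_le (tor_coker_f.ker_lTensor_le ?_)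
  rw [LinearMap.mem_ker, LinearMap.lTensor_comp_apply, hx, map_zero]

theorem TorOneVanishes.flat_of_map_le_jacobson [IsNoetherianRing R] {m : Ideal R}
    [m.IsMaximal] {A : Type*} [CommRing A] [IsNoetherianRing A] [Algebra R A] [Module A N]
    [IsScalarTower R A N] [Module.Finite A N]
    (hm : m.map (algebraMap R A) ≤ Ideal.jacobson ⊥) (h : TorOneVanishes R N (R ⧸ m)) :
    Module.Flat R N := by
  refine h.flat_of_isHausdorff fun I ↦ ?_
  have : Module.Finite A (N ⊗[R] I) :=
    .equiv (AlgebraTensorModule.cancelBaseChange R A A N I)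
  exact IsHausdorff.map_algebraMap_iff.1 (.of_le_jacobson _ _ hm)

theorem TorOneVanishes.flat_localizedModule [IsNoetherianRing R] {m : Ideal R} [m.IsMaximal]
    {S : Type*} [CommRing S] [IsNoetherianRing S] [Algebra R S] {M : Type*} [AddCommGroup M]
    [Module R M] [Module S M] [IsScalarTower R S M] [Module.Finite S M] {P : Ideal S} [P.IsPrime]
    (hmP : m ≤ P.comap (algebraMap R S))
    (h : TorOneVanishes R (LocalizedModule P.primeCompl M) (R ⧸ m)) :
    Module.Flat R (LocalizedModule P.primeCompl M) := by
  let A := Localization.AtPrime P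
  let N := LocalizedModule P.primeCompl M
  have : IsScalarTower R A N := .to₁₃₄ R S A N
  have : IsNoetherianRing A := IsLocalization.isNoetherianRing P.primeCompl A inferInstance
  have : Module.Finite A N :=
    .of_isLocalizedModule P.primeCompl (LocalizedModule.mkLinearMap P.primeCompl M)
  have hmA : m.map (algebraMap R A) ≤ Ideal.jacobson ⊥ := by
    rw [IsLocalRing.jacobson_eq_maximalIdeal _ bot_ne_top, Ideal.map_le_iff_le_comap,
      IsScalarTower.algebraMap_eq R S A, ← Ideal.comap_comap]
    exact hmP.trans_eq (congrArg _ Localization.AtPrime.under_maximalIdeal.symm)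
  exact h.flat_of_map_le_jacobson hmA

end TorOneVanishes

section Localization

open IsLocalizedModule

variable {S : Type*} [CommRing S] (T : Submonoid S)
  {X Y Z X' Y' Z' : Type*} [AddCommGroup X] [Module S X] [AddCommGroup Y] [Module S Y]
  [AddCommGroup Z] [Module S Z] [AddCommGroup X'] [Module S X'] [AddCommGroup Y'] [Module S Y']
  [AddCommGroup Z'] [Module S Z']
  (ℓX : X →ₗ[S] X') (ℓY : Y →ₗ[S] Y') (ℓZ : Z →ₗ[S] Z')
  [IsLocalizedModule T ℓX] [IsLocalizedModule T ℓY] [IsLocalizedModule T ℓZ]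

theorem exact_isLocalizedModule_map_iff {f : X →ₗ[S] Y} {g : Y →ₗ[S] Z} (hgf : g ∘ₗ f = 0) :
    Function.Exact (map T ℓX ℓY f) (map T ℓY ℓZ g) ↔
      ∀ y, g y = 0 → ∃ t ∈ T, t • y ∈ LinearMap.range f := by
  constructor
  · intro h y hy
    obtain ⟨x', hx'⟩ := (h (ℓY y)).1 (by rw [map_apply, hy, map_zero])
    obtain ⟨⟨x, s⟩, rfl⟩ := mk'_surjective T ℓX x'
    rw [Function.uncurry_apply_pair, map_mk', mk'_eq_iff, Submonoid.smul_def, ← map_smul,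
      eq_iff_exists T ℓY] at hx'
    obtain ⟨t, ht⟩ := hx'
    refine ⟨t * s, mul_mem t.2 s.2, (t : S) • x, ?_⟩
    rw [map_smul, mul_smul]
    exact ht
  · intro h y'
    obtain ⟨⟨y, s⟩, rfl⟩ := mk'_surjective T ℓY y'
    rw [Function.uncurry_apply_pair, map_mk', mk'_eq_zero']
    constructor
    · rintro ⟨t, ht⟩
      obtain ⟨u, hu, x, hx⟩ := h ((t : S) • y) (by rw [map_smul]; exact ht)
      refine ⟨mk' ℓX x ((⟨u, hu⟩ * t) * s), ?_⟩
      rw [map_mk', hx, ← mk'_cancel_left (f := ℓY) y (⟨u, hu⟩ * t) s, mul_smul]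
      rfl
    · rintro ⟨x', hx'⟩
      obtain ⟨⟨x, u⟩, rfl⟩ := mk'_surjective T ℓX x'
      rw [← mk'_eq_zero' ℓZ s, ← map_mk' T ℓY ℓZ, ← hx',
        Function.uncurry_apply_pair, map_mk', map_mk', ← LinearMap.comp_apply, hgf,
        LinearMap.zero_apply, mk'_zero]

end Localization

section Homotopy

theorem exists_comp_eq_of_exact {R P A B C : Type*} [Ring R] [AddCommGroup P] [Module R P]
    [Module.Projective R P] [AddCommGroup A] [Module R A] [AddCommGroup B] [Module R B]
    [AddCommGroup C] [Module R C] {f : A →ₗ[R] B} {g : B →ₗ[R] C} (hfg : Function.Exact f g)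
    {u : P →ₗ[R] B} (hu : g ∘ₗ u = 0) : ∃ h : P →ₗ[R] A, f ∘ₗ h = u := by
  obtain ⟨h, hh⟩ := Module.projective_lifting_property f.rangeRestrict
    (u.codRestrict _ fun x ↦ (hfg _).1 (LinearMap.congr_fun hu x)) f.surjective_rangeRestrict
  exact ⟨h, LinearMap.ext fun x ↦ congrArg Subtype.val (LinearMap.congr_fun hh x)⟩

theorem exists_homotopy_smul_id {R L : Type*} [CommRing R] [AddCommGroup L] [Module R L]
    {F : ℕ → Type*} [∀ q, AddCommGroup (F q)] [∀ q, Module R (F q)]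
    [∀ q, Module.Projective R (F q)] {dF : ∀ q, F (q + 1) →ₗ[R] F q} {ε : F 0 →ₗ[R] L}
    (hexact : ∀ q, Function.Exact (dF (q + 1)) (dF q)) (hexact0 : Function.Exact (dF 0) ε)
    {r : R} (hr : r ∈ Module.annihilator R L) (q : ℕ) :
    ∃ (h : F q →ₗ[R] F (q + 1)) (h' : F (q + 1) →ₗ[R] F (q + 2)),
      dF (q + 1) ∘ₗ h' + h ∘ₗ dF q = r • LinearMap.id := by
  induction q with
  | zero =>
    obtain ⟨h, hh⟩ := exists_comp_eq_of_exact hexact0 (u := r • LinearMap.id) <| by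
      ext x
      simpa using Module.mem_annihilator.1 hr (ε x)
    obtain ⟨h', hh'⟩ := exists_comp_eq_of_exact (hexact 0)
      (u := r • LinearMap.id - h ∘ₗ dF 0) <| by
        rw [LinearMap.comp_sub, ← LinearMap.comp_assoc, hh, LinearMap.comp_smul,
          LinearMap.smul_comp, LinearMap.comp_id, LinearMap.id_comp, sub_self]
    exact ⟨h, h', by rw [hh', sub_add_cancel]⟩
  | succ q ih =>
    obtain ⟨h, h', hh⟩ := ih
    obtain ⟨h'', hh''⟩ := exists_comp_eq_of_exact (hexact (q + 1))
      (u := r • LinearMap.id - h' ∘ₗ dF (q + 1)) <| by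
        rw [LinearMap.comp_sub, ← LinearMap.comp_assoc, eq_sub_of_add_eq hh, LinearMap.sub_comp,
          LinearMap.comp_assoc, (hexact q).linearMap_comp_eq_zero, LinearMap.comp_zero, sub_zero,
          LinearMap.comp_smul, LinearMap.smul_comp, LinearMap.comp_id, LinearMap.id_comp, sub_self]
    exact ⟨h', h'', by rw [hh'', sub_add_cancel]⟩

end Homotopy

section TorMod

variable {R : Type} [CommRing R] {S : Type} [CommRing S] [Algebra R S]
  {M : Type} [AddCommGroup M] [Module R M] [Module S M] [IsScalarTower R S M]
  {F : ℕ → Type} [∀ q, AddCommGroup (F q)] [∀ q, Module R (F q)]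
  {dF : ∀ q : ℕ, F (q + 1) →ₗ[R] F q}

theorem algebraMap_mem_annihilator_torMod_succ {L : Type*} [AddCommGroup L] [Module R L]
    [∀ q, Module.Projective R (F q)] {ε : F 0 →ₗ[R] L}
    (hexact : ∀ q, Function.Exact (dF (q + 1)) (dF q)) (hexact0 : Function.Exact (dF 0) ε)
    {r : R} (hr : r ∈ Module.annihilator R L) (q : ℕ) :
    algebraMap R S r ∈ Module.annihilator S (torMod R S M F dF (q + 1)) := by
  obtain ⟨h, h', hh⟩ := exists_homotopy_smul_id hexact hexact0 hr q
  rw [Module.mem_annihilator]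
  intro z
  obtain ⟨⟨x, hx⟩, rfl⟩ := Submodule.Quotient.mk_surjective _ z
  have hx' : (dF q).lTensor M x = 0 := hx
  refine (Submodule.Quotient.mk_eq_zero _).2 ⟨h'.lTensor M x, ?_⟩
  calc (dF (q + 1)).lTensor M (h'.lTensor M x)
      = (dF (q + 1) ∘ₗ h' + h ∘ₗ dF q).lTensor M x := by
        rw [LinearMap.lTensor_add, LinearMap.add_apply, LinearMap.lTensor_comp_apply,
          LinearMap.lTensor_comp_apply, hx', map_zero, add_zero]
    _ = algebraMap R S r • x := by
        rw [hh, LinearMap.lTensor_smul, LinearMap.lTensor_id, LinearMap.smul_apply,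
          LinearMap.id_apply, algebraMap_smul]

theorem notMem_support_torMod_succ_iff {P : PrimeSpectrum S} {q : ℕ} :
    P ∉ Module.support S (torMod R S M F dF (q + 1)) ↔
      ∀ x, torD R S M F dF q x = 0 →
        ∃ s ∈ P.asIdeal.primeCompl, s • x ∈ LinearMap.range (torD R S M F dF (q + 1)) := by
  rw [Module.notMem_support_iff']
  constructor
  · intro h x hx
    obtain ⟨s, hs, hsx⟩ := h (Submodule.Quotient.mk ⟨x, hx⟩)
    exact ⟨s, hs, (Submodule.Quotient.mk_eq_zero (Submodule.comap _ _)).1 hsx⟩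
  · intro h z
    obtain ⟨⟨x, hx⟩, rfl⟩ := Submodule.Quotient.mk_surjective _ z
    obtain ⟨s, hs, hsx⟩ := h x hx
    exact ⟨s, hs, (Submodule.Quotient.mk_eq_zero _).2 hsx⟩

theorem isLocalizedModule_map_torD (T : Submonoid S) {N : Type} [AddCommGroup N] [Module R N]
    [Module S N] [IsScalarTower R S N] (ℓ : M →ₗ[S] N) [IsLocalizedModule T ℓ] (q : ℕ) :
    IsLocalizedModule.map T (AlgebraTensorModule.rTensor R (F (q + 1)) ℓ)
      (AlgebraTensorModule.rTensor R (F q) ℓ) (torD R S M F dF q) = torD R S N F dF q := by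
  refine IsLocalizedModule.linearMap_ext T (AlgebraTensorModule.rTensor R (F (q + 1)) ℓ)
    (AlgebraTensorModule.rTensor R (F q) ℓ) ?_
  ext x y
  exact IsLocalizedModule.map_apply T (AlgebraTensorModule.rTensor R (F (q + 1)) ℓ)
    (AlgebraTensorModule.rTensor R (F q) ℓ) (torD R S M F dF q) (x ⊗ₜ y)

theorem notMem_support_torMod_succ_iff_exact {P : PrimeSpectrum S} {q : ℕ}
    (hd : dF q ∘ₗ dF (q + 1) = 0) {N : Type} [AddCommGroup N] [Module R N] [Module S N]
    [IsScalarTower R S N] (ℓ : M →ₗ[S] N) [IsLocalizedModule P.asIdeal.primeCompl ℓ] :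
    P ∉ Module.support S (torMod R S M F dF (q + 1)) ↔
      Function.Exact ((dF (q + 1)).lTensor N) ((dF q).lTensor N) := by
  have torD_comp : torD R S M F dF q ∘ₗ torD R S M F dF (q + 1) = 0 := by
    ext x y
    exact (congrArg (x ⊗ₜ[R] ·) (LinearMap.congr_fun hd y)).trans (tmul_zero _ _)
  rw [notMem_support_torMod_succ_iff,
    ← exact_isLocalizedModule_map_iff P.asIdeal.primeCompl
      (AlgebraTensorModule.rTensor R (F (q + 2)) ℓ) (AlgebraTensorModule.rTensor R (F (q + 1)) ℓ)
      (AlgebraTensorModule.rTensor R (F q) ℓ) torD_comp,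
    isLocalizedModule_map_torD, isLocalizedModule_map_torD]
  rfl

end TorMod

theorem support_tor_subset_support_tor_one_general
    {R : Type} [CommRing R] [IsNoetherianRing R] {m : Ideal R} [m.IsMaximal]
    {S : Type} [CommRing S] [IsNoetherianRing S] [Algebra R S]
    {M : Type} [AddCommGroup M] [Module R M] [Module S M] [IsScalarTower R S M]
    [Module.Finite S M]
    {F : ℕ → Type} [∀ q, AddCommGroup (F q)] [∀ q, Module R (F q)]
    [∀ q, Module.Projective R (F q)] {dF : ∀ q : ℕ, F (q + 1) →ₗ[R] F q} {ε : F 0 →ₗ[R] R ⧸ m}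
    (hexact : ∀ q : ℕ, Function.Exact (dF (q + 1)) (dF q))
    (hexact0 : Function.Exact (dF 0) ε) (hsurj : Function.Surjective ε) (q : ℕ) (hq : 1 ≤ q) :
    Module.support S (torMod R S M F dF q) ⊆ Module.support S (torMod R S M F dF 1) := by
  obtain ⟨q, rfl⟩ := Nat.exists_eq_add_of_le' hq
  intro P hPq
  by_contra hP1
  have hmP : m ≤ P.asIdeal.comap (algebraMap R S) := fun r hr ↦
    Module.annihilator_le_of_mem_support hPq
      (algebraMap_mem_annihilator_torMod_succ hexact hexact0
        (by rwa [Ideal.annihilator_quotient]) q)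
  have hd (q : ℕ) : dF q ∘ₗ dF (q + 1) = 0 := (hexact q).linearMap_comp_eq_zero
  let N := LocalizedModule P.asIdeal.primeCompl M
  let ℓ : M →ₗ[S] N := LocalizedModule.mkLinearMap P.asIdeal.primeCompl M
  have tor_one_vanishes : TorOneVanishes R N (R ⧸ m) :=
    torOneVanishes_of_exact_lTensor (hd 0) hexact0 hsurj
      ((notMem_support_torMod_succ_iff_exact (hd 0) ℓ).1 hP1)
  have : Module.Flat R N := tor_one_vanishes.flat_localizedModule hmP
  exact (notMem_support_torMod_succ_iff_exact (hd q) ℓ).2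
    (Module.Flat.lTensor_exact N (hexact q)) hPq

open MvPolynomial in
/-- Let `(R, 𝔪)` be a Noetherian local ring, `S := R[X_1, …, X_n]` a polynomial ring
graded with `deg X_i = w i > 0` (and `R` in degree `0`), and `M` a finitely generated
graded `S`-module.  `Tor_q^R(M, R/𝔪)` is computed from any resolution of `R/𝔪` by finite
free `R`-modules, with its natural `S`-module structure through `M`.  Then for every
`q ≥ 1`, `Supp_S (Tor_q^R(M, R/𝔪)) ⊆ Supp_S (Tor_1^R(M, R/𝔪))`. -/
theorem support_tor_subset_support_tor_one
    (R : Type) [CommRing R] [IsNoetherianRing R] [IsLocalRing R]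
    {n : ℕ} (w : Fin n → ℤ) (hw : ∀ i, 0 < w i)
    (M : Type) [AddCommGroup M]
    [Module (MvPolynomial (Fin n) R) M] [Module R M]
    [IsScalarTower R (MvPolynomial (Fin n) R) M]
    [Module.Finite (MvPolynomial (Fin n) R) M]
    (ℳ : ℤ → AddSubgroup M) [DirectSum.Decomposition ℳ]
    [SetLike.GradedSMul (weightedHomogeneousSubmodule R w) ℳ]
    (F : ℕ → Type) [∀ q, AddCommGroup (F q)] [∀ q, Module R (F q)]
    [∀ q, Module.Free R (F q)] [∀ q, Module.Finite R (F q)]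
    (dF : ∀ q : ℕ, F (q + 1) →ₗ[R] F q)
    (ε : F 0 →ₗ[R] (R ⧸ IsLocalRing.maximalIdeal R))
    (hexact : ∀ q : ℕ, Function.Exact (dF (q + 1)) (dF q))
    (hexact0 : Function.Exact (dF 0) ε) (hsurj : Function.Surjective ε) :
    ∀ q : ℕ, 1 ≤ q →
      Module.support (MvPolynomial (Fin n) R)
          (torMod R (MvPolynomial (Fin n) R) M F dF q) ⊆
        Module.support (MvPolynomial (Fin n) R)
          (torMod R (MvPolynomial (Fin n) R) M F dF 1) := by
  exact support_tor_subset_support_tor_one_general hexact hexact0 hsurj
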